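/- Let n = n₁·n₂ with n₁, n₂ coprime positive integers, and let k be a divisor of n, written uniquely as k = k₁·k₂ with k₁ | n₁ and k₂ | n₂. Then Y[n,k] = Y[n₁,k₁]·Y[n₂,k₂]. -/

import Mathlib

/-- The Ramanujan sum `c_d(r)`: the sum of the `r`-th powers of all primitive
`d`-th roots of unity. -/
noncomputable def ramanujanSum (d r : ℕ) : ℂ :=
  ∑ m ∈ (Finset.range d).filter (fun m => Nat.gcd m d = 1),
    Complex.exp (2 * Real.pi * Complex.I * ((m : ℂ) * (r : ℂ) / (d : ℂ)))

/-- `Y[n,k] = ∑_{d ∣ n} c_k(n/d) · c_d(n/d)`. -/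
noncomputable def Y (n k : ℕ) : ℂ :=
  ∑ d ∈ n.divisors, ramanujanSum k (n / d) * ramanujanSum d (n / d)

theorem aux_inj (x y : ℂ) (d s : ℕ) (hd : 0 < d) (hx : x ^ d = 1) (hy : y ^ d = 1)
    (h : Nat.Coprime s d) (hs : x ^ s = y ^ s) : x = y := by
  have hy0 : y ≠ 0 := by
    rintro rfl
    simp [hd.ne'] at hy
  have h1 : (x / y) ^ s = 1 := by rw [div_pow, hs, div_self (pow_ne_zero _ hy0)]
  have h2 : (x / y) ^ d = 1 := by rw [div_pow, hx, hy, div_one]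
  have h3 := pow_gcd_eq_one.2 ⟨h1, h2⟩
  rw [h, pow_one] at h3
  exact (div_eq_one_iff_eq hy0).1 h3

theorem ram_eq (d r : ℕ) (hd : 0 < d) :
    ramanujanSum d r = ∑ z ∈ primitiveRoots d ℂ, z ^ r := by
  unfold ramanujanSum
  refine Finset.sum_bij (fun m _ => Complex.exp (2 * Real.pi * Complex.I * ((m : ℂ) / d)))
    ?_ ?_ ?_ ?_
  · intro m hm
    rw [Finset.mem_filter] at hm
    rw [mem_primitiveRoots hd]
    exact Complex.isPrimitiveRoot_exp_of_coprime m d hd.ne' hm.2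
  · intro m hm m' hm' h
    rw [Finset.mem_filter, Finset.mem_range] at hm hm'
    have hp := Complex.isPrimitiveRoot_exp d hd.ne'
    refine hp.pow_inj hm.1 hm'.1 ?_
    rw [← Complex.exp_nat_mul, ← Complex.exp_nat_mul]
    convert h using 2 <;> ring
  · intro z hz
    rw [mem_primitiveRoots hd] at hz
    obtain ⟨i, hi, hc, he⟩ := (Complex.isPrimitiveRoot_iff z d hd.ne').1 hz
    exact ⟨i, by simpa [hi] using hc, he⟩
  · intro m hm
    rw [← Complex.exp_nat_mul]
    congr 1
    ring

theorem ram_mul_right (d r s : ℕ) (hd : 0 < d) (h : Nat.Coprime s d) :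
    ramanujanSum d (s * r) = ramanujanSum d r := by
  rw [ram_eq d _ hd, ram_eq d _ hd]
  have hmap : Set.MapsTo (fun z : ℂ => z ^ s) (primitiveRoots d ℂ) (primitiveRoots d ℂ) := by
    intro z hz
    rw [Finset.mem_coe, mem_primitiveRoots hd] at hz ⊢
    exact hz.pow_of_coprime s h
  have hinj : Set.InjOn (fun z : ℂ => z ^ s) (primitiveRoots d ℂ) := by
    intro z hz w hw hzw
    rw [Finset.mem_coe, mem_primitiveRoots hd] at hz hw
    exact aux_inj z w d s hd hz.pow_eq_one hw.pow_eq_one h hzw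
  refine Finset.sum_nbij (fun z : ℂ => z ^ s) hmap hinj
    (Finset.surjOn_of_injOn_of_card_le _ hmap hinj le_rfl) ?_
  intro z _
  rw [pow_mul]

theorem ram_mul_left (a b r : ℕ) (ha : 0 < a) (hb : 0 < b) (h : Nat.Coprime a b) :
    ramanujanSum (a * b) r = ramanujanSum a r * ramanujanSum b r := by
  have hab : 0 < a * b := Nat.mul_pos ha hb
  rw [ram_eq _ _ hab, ram_eq _ _ ha, ram_eq _ _ hb, Finset.sum_mul_sum, ← Finset.sum_product']
  symm
  have hmap : Set.MapsTo (fun z : ℂ × ℂ => z.1 * z.2)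
      (primitiveRoots a ℂ ×ˢ primitiveRoots b ℂ : Finset (ℂ × ℂ)) (primitiveRoots (a * b) ℂ) := by
    rintro ⟨z, w⟩ hz
    rw [Finset.mem_coe, Finset.mem_product, mem_primitiveRoots ha, mem_primitiveRoots hb] at hz
    rw [Finset.mem_coe, mem_primitiveRoots hab]
    obtain ⟨hz, hw⟩ := hz
    have := (Commute.all z w).orderOf_mul_eq_mul_orderOf_of_coprime
      (by rw [← hz.eq_orderOf, ← hw.eq_orderOf]; exact h)
    rw [← hz.eq_orderOf, ← hw.eq_orderOf] at this
    rw [← this]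
    exact IsPrimitiveRoot.orderOf _
  have hinj : Set.InjOn (fun z : ℂ × ℂ => z.1 * z.2)
      (primitiveRoots a ℂ ×ˢ primitiveRoots b ℂ : Finset (ℂ × ℂ)) := by
    rintro ⟨z, w⟩ hz ⟨z', w'⟩ hz' he
    rw [Finset.mem_coe, Finset.mem_product, mem_primitiveRoots ha, mem_primitiveRoots hb] at hz hz'
    obtain ⟨hz, hw⟩ := hz
    obtain ⟨hz', hw'⟩ := hz'
    simp only at hz hw hz' hw' he
    have e1 : z ^ b = z' ^ b := by
      have := congrArg (· ^ b) he
      simpa [mul_pow, hw.pow_eq_one, hw'.pow_eq_one] using this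
    have e2 : w ^ a = w' ^ a := by
      have := congrArg (· ^ a) he
      simpa [mul_pow, hz.pow_eq_one, hz'.pow_eq_one] using this
    rw [aux_inj z z' a b ha hz.pow_eq_one hz'.pow_eq_one h.symm e1,
      aux_inj w w' b a hb hw.pow_eq_one hw'.pow_eq_one h e2]
  refine Finset.sum_nbij (fun z : ℂ × ℂ => z.1 * z.2) hmap hinj
    (Finset.surjOn_of_injOn_of_card_le _ hmap hinj ?_) ?_
  · rw [Finset.card_product, Complex.card_primitiveRoots, Complex.card_primitiveRoots,
      Complex.card_primitiveRoots, Nat.totient_mul h]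
  · intro z _
    rw [mul_pow]

theorem ram_mul (a b r s : ℕ) (ha : 0 < a) (hb : 0 < b) (h : Nat.Coprime a b)
    (hr : Nat.Coprime r b) (hs : Nat.Coprime s a) :
    ramanujanSum (a * b) (r * s) = ramanujanSum a r * ramanujanSum b s := by
  rw [ram_mul_left a b _ ha hb h, ram_mul_right b s r hb hr, mul_comm r s,
    ram_mul_right a r s ha hs]

theorem stmt_13 (n₁ n₂ : ℕ) (h₁ : 0 < n₁) (h₂ : 0 < n₂) (hcop : Nat.Coprime n₁ n₂)
    (k₁ k₂ : ℕ) (hk₁ : k₁ ∣ n₁) (hk₂ : k₂ ∣ n₂) :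
    Y (n₁ * n₂) (k₁ * k₂) = Y n₁ k₁ * Y n₂ k₂ := by
  unfold Y
  rw [Nat.divisors_mul, Finset.mul_def, Finset.sum_image hcop.mul_injOn_divisors,
    Finset.sum_product, Finset.sum_mul_sum]
  refine Finset.sum_congr rfl fun a ha => Finset.sum_congr rfl fun b hb => ?_
  have ha' := Nat.dvd_of_mem_divisors ha
  have hb' := Nat.dvd_of_mem_divisors hb
  have hp := fun {x y : ℕ} (hx : x ∣ n₁) (hy : y ∣ n₂) => Nat.Coprime.of_dvd hx hy hcop
  have qa := Nat.div_dvd_of_dvd ha'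
  have qb := Nat.div_dvd_of_dvd hb'
  rw [← Nat.div_mul_div_comm ha' hb',
    ram_mul k₁ k₂ _ _ (Nat.pos_of_dvd_of_pos hk₁ h₁) (Nat.pos_of_dvd_of_pos hk₂ h₂)
      (hp hk₁ hk₂) (hp qa hk₂) (hp hk₁ qb).symm,
    ram_mul a b _ _ (Nat.pos_of_dvd_of_pos ha' h₁) (Nat.pos_of_dvd_of_pos hb' h₂)
      (hp ha' hb') (hp qa hb') (hp ha' qb).symm]
  ring
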